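/- Let I ⊆ ℝ be a nondegenerate interval, n ∈ ℕ, let ω = (ω_1,…,ω_n) be an n-dimensional positive Chebyshev system over I, and let ω_{n+1} : I → ℝ be such that ω* = (ω_1,…,ω_n,ω_{n+1}) is an (n+1)-dimensional positive Chebyshev system over I. Let f : I → ℝ. Then, for every (x_0,…,x_n) ∈ σ_{n+1}(I), there exists p ∈ [x_0, x_n] such that [x_0,…,x_n; f]_{ω*} ≥ D̲_{ω*} f(p). -/

import Mathlib

/-- `Phi ω x` is the determinant `det(ωᵢ(xⱼ))` of an `n`-tuple of functions
evaluated at an `n`-tuple of points. -/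
noncomputable def Phi {n : ℕ} (ω : Fin n → ℝ → ℝ) (x : Fin n → ℝ) : ℝ :=
  (Matrix.of fun i j => ω i (x j)).det

/-- `ω` is an `n`-dimensional positive Chebyshev system over `H`:
`Phi ω` is positive on all strictly increasing `n`-tuples of elements of `H`. -/
def IsPosChebyshev {n : ℕ} (ω : Fin n → ℝ → ℝ) (H : Set ℝ) : Prop :=
  ∀ x : Fin n → ℝ, StrictMono x → (∀ j, x j ∈ H) → 0 < Phi ω x

/-- The generalized `ω*`-divided difference `[x₀,…,xₙ; f]_{ω*}`, where
`ω* = (ω₁,…,ωₙ,ω')`:  `Φ_{(ω,f)}(x) / Φ_{ω*}(x)`. -/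
noncomputable def divDiff {n : ℕ} (ω : Fin n → ℝ → ℝ) (ω' : ℝ → ℝ) (f : ℝ → ℝ)
    (x : Fin (n + 1) → ℝ) : ℝ :=
  Phi (Fin.snoc ω f) x / Phi (Fin.snoc ω ω') x

/-- The lower Dinghas type derivative `D̲_{ω*} f(p)`: the limit, as `δ → 0⁺`, of the
infimum of the divided differences `[x₀,…,xₙ; f]_{ω*}` over strictly increasing
tuples in `I` with `x₀ ≤ p ≤ xₙ` and `xₙ − x₀ < δ`; realized as a `liminf`
(with values in `EReal`) along the filter `⨅ δ > 0, 𝓟 {tuples with xₙ − x₀ < δ}`. -/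
noncomputable def dinghas {n : ℕ} (ω : Fin n → ℝ → ℝ) (ω' : ℝ → ℝ) (f : ℝ → ℝ)
    (I : Set ℝ) (p : ℝ) : EReal :=
  Filter.liminf (fun x : Fin (n + 1) → ℝ => (divDiff ω ω' f x : EReal))
    (⨅ δ ∈ Set.Ioi (0 : ℝ), Filter.principal
      {x : Fin (n + 1) → ℝ | StrictMono x ∧ (∀ j, x j ∈ I) ∧
        x 0 ≤ p ∧ p ≤ x (Fin.last n) ∧ x (Fin.last n) - x 0 < δ})

lemma Phi_snoc_expand {n : ℕ} (ω : Fin n → ℝ → ℝ) (h : ℝ → ℝ) (u : Fin (n + 1) → ℝ) :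
    Phi (Fin.snoc ω h) u
      = ∑ j : Fin (n + 1), (-1) ^ (n + (j : ℕ)) * h (u j) * Phi ω (u ∘ j.succAbove) := by
  unfold Phi
  rw [Matrix.det_succ_row _ (Fin.last n)]
  refine Finset.sum_congr rfl fun j _ => ?_
  simp only [Fin.val_last, Matrix.of_apply, Fin.snoc_last]
  congr 2
  ext i k
  simp [Matrix.submatrix_apply, Fin.succAbove_last]

lemma Phi_snoc_self {n : ℕ} (ω : Fin n → ℝ → ℝ) (k : Fin n) (u : Fin (n + 1) → ℝ) :
    Phi (Fin.snoc ω (ω k)) u = 0 := by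
  unfold Phi
  refine Matrix.det_zero_of_row_eq (i := k.castSucc) (j := Fin.last n)
    (Fin.castSucc_lt_last k).ne ?_
  ext j
  simp

lemma Phi_snoc_comb {n : ℕ} (ω : Fin n → ℝ → ℝ) (ω' f : ℝ → ℝ) (A : ℝ) (c : Fin n → ℝ)
    (u : Fin (n + 1) → ℝ) :
    Phi (Fin.snoc ω (fun t => f t - A * ω' t - ∑ k, c k * ω k t)) u
      = Phi (Fin.snoc ω f) u - A * Phi (Fin.snoc ω ω') u := by
  have h0 : ∑ k, c k * Phi (Fin.snoc ω (ω k)) u = 0 := by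
    simp [Phi_snoc_self]
  rw [← sub_zero (_ - _), ← h0]
  simp only [Phi_snoc_expand, Finset.mul_sum]
  rw [Finset.sum_comm, ← Finset.sum_sub_distrib, ← Finset.sum_sub_distrib]
  refine Finset.sum_congr rfl fun j _ => ?_
  have : ∑ k, c k * ((-1) ^ (n + (j : ℕ)) * ω k (u j) * Phi ω (u ∘ j.succAbove))
      = (-1) ^ (n + (j : ℕ)) * (∑ k, c k * ω k (u j)) * Phi ω (u ∘ j.succAbove) := by
    rw [Finset.mul_sum, Finset.sum_mul]
    exact Finset.sum_congr rfl fun k _ => by ring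
  rw [this]
  ring

lemma Phi_snoc_single {n : ℕ} (ω : Fin n → ℝ → ℝ) (h : ℝ → ℝ) (u : Fin (n + 1) → ℝ)
    (k : Fin (n + 1)) (hk : ∀ i, i ≠ k → h (u i) = 0) :
    Phi (Fin.snoc ω h) u = (-1) ^ (n + (k : ℕ)) * h (u k) * Phi ω (u ∘ k.succAbove) := by
  rw [Phi_snoc_expand, Finset.sum_eq_single k]
  · intro b _ hb
    simp [hk b hb]
  · simp

lemma exists_interp {n : ℕ} (ω : Fin n → ℝ → ℝ) (y : Fin n → ℝ) (hy : Phi ω y ≠ 0)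
    (g : ℝ → ℝ) : ∃ c : Fin n → ℝ, ∀ i, g (y i) - ∑ k, c k * ω k (y i) = 0 := by
  let M : Matrix (Fin n) (Fin n) ℝ := Matrix.of fun i j => ω i (y j)
  have hM : IsUnit M.det := isUnit_iff_ne_zero.mpr hy
  refine ⟨Matrix.vecMul (fun i => g (y i)) M⁻¹, fun i => ?_⟩
  have h : Matrix.vecMul (Matrix.vecMul (fun i => g (y i)) M⁻¹) M = fun i => g (y i) := by
    rw [Matrix.vecMul_vecMul, Matrix.nonsing_inv_mul _ hM, Matrix.vecMul_one]
  have h2 := congrFun h i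
  rw [← h2]
  simp only [Matrix.vecMul, dotProduct, M, Matrix.of_apply, sub_self]

lemma key {n : ℕ} (I : Set ℝ) (ω : Fin n → ℝ → ℝ) (ω' : ℝ → ℝ)
    (hω : IsPosChebyshev ω I) (hωs : IsPosChebyshev (Fin.snoc ω ω') I)
    (f : ℝ → ℝ) (z : Fin (n + 2) → ℝ) (hz : StrictMono z) (hzI : ∀ j, z j ∈ I)
    (j : Fin (n + 2)) (hj0 : j ≠ 0) (hjl : j ≠ Fin.last (n + 1)) :
    divDiff ω ω' f (z ∘ Fin.succ) ≤ divDiff ω ω' f (z ∘ j.succAbove) ∨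
    divDiff ω ω' f (z ∘ Fin.castSucc) ≤ divDiff ω ω' f (z ∘ j.succAbove) := by
  by_contra! hcon
  obtain ⟨h1, h2⟩ := hcon
  set A := divDiff ω ω' f (z ∘ j.succAbove) with hA
  obtain ⟨j', rfl⟩ := Fin.exists_succ_eq.mpr hj0
  obtain ⟨j'', hj''⟩ := Fin.exists_castSucc_eq.mpr hjl
  have hsj := Fin.strictMono_succAbove j'.succ
  have P0 : 0 < Phi (Fin.snoc ω ω') (z ∘ Fin.succ) :=
    hωs _ (hz.comp Fin.strictMono_succ) fun i => hzI _
  have Pl : 0 < Phi (Fin.snoc ω ω') (z ∘ Fin.castSucc) :=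
    hωs _ (hz.comp Fin.strictMono_castSucc) fun i => hzI _
  have Pj : 0 < Phi (Fin.snoc ω ω') (z ∘ j'.succ.succAbove) :=
    hωs _ (hz.comp hsj) fun i => hzI _
  obtain ⟨c, hc⟩ := exists_interp ω ((z ∘ Fin.succ) ∘ j'.succAbove)
    (hω _ ((hz.comp Fin.strictMono_succ).comp (Fin.strictMono_succAbove j')) fun i => hzI _).ne'
    (fun t => f t - A * ω' t)
  have hcomb := fun u => Phi_snoc_comb ω ω' f A c u
  set h : ℝ → ℝ := fun t => f t - A * ω' t - ∑ k, c k * ω k t with hh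
  have hv1 : ∀ i : Fin (n + 2), i ≠ 0 → i ≠ j'.succ → h (z i) = 0 := by
    intro i hi0 hij
    obtain ⟨i', rfl⟩ := Fin.exists_succ_eq.mpr hi0
    have : i' ≠ j' := fun e => hij (by rw [e])
    obtain ⟨i'', rfl⟩ := Fin.exists_succAbove_eq this
    exact hc i''
  have G0 : 0 < Phi (Fin.snoc ω h) (z ∘ Fin.succ) := by
    rw [hcomb]
    have := (lt_div_iff₀ P0).mp h1
    linarith
  have Gl : 0 < Phi (Fin.snoc ω h) (z ∘ Fin.castSucc) := by
    rw [hcomb]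
    have := (lt_div_iff₀ Pl).mp h2
    linarith
  have Gj : Phi (Fin.snoc ω h) (z ∘ j'.succ.succAbove) = 0 := by
    rw [hcomb, hA, divDiff, div_mul_cancel₀ _ Pj.ne', sub_self]
  have hz0 : h (z 0) = 0 := by
    rw [Phi_snoc_single ω h _ 0] at Gj
    · have hW := hω ((z ∘ j'.succ.succAbove) ∘ (0 : Fin (n + 1)).succAbove)
        ((hz.comp hsj).comp (Fin.strictMono_succAbove 0)) fun i => hzI _
      have hs : ((-1 : ℝ)) ^ (n + ((0 : Fin (n + 1)) : ℕ)) ≠ 0 := pow_ne_zero _ (by norm_num)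
      have := (mul_eq_zero.mp Gj).resolve_right hW.ne'
      have := (mul_eq_zero.mp this).resolve_left hs
      simpa [Fin.succ_succAbove_zero] using this
    · intro i hi
      apply hv1
      · intro e
        apply hi
        apply hsj.injective
        rw [e, Fin.succ_succAbove_zero]
      · exact Fin.succAbove_ne _ _
  have hv : ∀ i : Fin (n + 2), i ≠ j'.succ → h (z i) = 0 := by
    intro i hi
    by_cases h0 : i = 0
    · rw [h0, hz0]
    · exact hv1 i h0 hi
  rw [Phi_snoc_single ω h (z ∘ Fin.succ) j' (fun i hi => hv _ (by simpa using hi))] at G0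
  rw [Phi_snoc_single ω h (z ∘ Fin.castSucc) j'' (fun i hi => hv _ (by
    rw [← hj'']; simpa using hi))] at Gl
  have W0 := hω ((z ∘ Fin.succ) ∘ j'.succAbove)
    ((hz.comp Fin.strictMono_succ).comp (Fin.strictMono_succAbove j')) fun i => hzI _
  have Wl := hω ((z ∘ Fin.castSucc) ∘ j''.succAbove)
    ((hz.comp Fin.strictMono_castSucc).comp (Fin.strictMono_succAbove j'')) fun i => hzI _
  have g0 := pos_of_mul_pos_left G0 W0.le
  have gl := pos_of_mul_pos_left Gl Wl.le
  have hval : (j'' : ℕ) = j' + 1 := by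
    have := congrArg Fin.val hj''
    simpa using this
  simp only [Function.comp_apply] at g0 gl
  rw [hj'', hval, ← add_assoc, pow_succ] at gl
  linarith

lemma step {n : ℕ} (I : Set ℝ) (ω : Fin n → ℝ → ℝ) (ω' : ℝ → ℝ)
    (hω : IsPosChebyshev ω I) (hωs : IsPosChebyshev (Fin.snoc ω ω') I)
    (f : ℝ → ℝ) (x : Fin (n + 1) → ℝ) (hx : StrictMono x) (hxI : ∀ j, x j ∈ I)
    (y : ℝ) (hyI : y ∈ I) (h0 : x 0 < y) (hl : y < x (Fin.last n)) (hy : y ∉ Set.range x) :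
    ∃ x' : Fin (n + 1) → ℝ, StrictMono x' ∧ (∀ j, x' j ∈ I) ∧
      divDiff ω ω' f x' ≤ divDiff ω ω' f x ∧ x 0 ≤ x' 0 ∧ x' (Fin.last n) ≤ x (Fin.last n) ∧
      y ∈ Set.range x' ∧
      (∀ t ∈ Set.range x, t ∈ Set.Ioo (x' 0) (x' (Fin.last n)) → t ∈ Set.range x') := by
  classical
  let S : Finset ℝ := insert y (Finset.univ.image x)
  have hS : S.card = n + 2 := by
    rw [Finset.card_insert_of_notMem, Finset.card_image_of_injective _ hx.injective]
    · simp
    · simpa using hy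
  let z : Fin (n + 2) → ℝ := S.orderEmbOfFin hS
  have hz : StrictMono z := (S.orderEmbOfFin hS).strictMono
  have hzr : Set.range z = insert y (Set.range x) := by
    have := Finset.range_orderEmbOfFin S hS
    simp only [z]
    rw [this]
    simp [S]
  obtain ⟨j, hj⟩ : y ∈ Set.range z := by rw [hzr]; exact Set.mem_insert _ _
  have hxz : z ∘ j.succAbove = x := by
    refine StrictMono.range_inj (hz.comp (Fin.strictMono_succAbove j)) hx |>.mp ?_
    rw [Set.range_comp, Fin.range_succAbove]
    rw [Set.image_compl_eq_range_sdiff_image hz.injective, hzr, Set.image_singleton, hj]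
    ext t
    simp only [Set.mem_sdiff, Set.mem_insert_iff, Set.mem_singleton_iff]
    constructor
    · tauto
    · intro ht
      exact ⟨Or.inr ht, fun e => hy (e ▸ ht)⟩
  have hzI : ∀ i, z i ∈ I := by
    intro i
    have : z i ∈ insert y (Set.range x) := hzr ▸ Set.mem_range_self i
    rcases this with h | ⟨k, hk⟩
    · rw [h]; exact hyI
    · rw [← hk]; exact hxI k
  have hx0 : ∃ i, z i = x 0 := by
    have : x 0 ∈ Set.range z := by rw [hzr]; exact Or.inr ⟨0, rfl⟩
    exact this
  have hxl : ∃ i, z i = x (Fin.last n) := by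
    have : x (Fin.last n) ∈ Set.range z := by rw [hzr]; exact Or.inr ⟨_, rfl⟩
    exact this
  obtain ⟨i0, hi0⟩ := hx0
  obtain ⟨il, hil⟩ := hxl
  have hj0 : j ≠ 0 := by
    rintro rfl
    have := hz.monotone (Fin.zero_le i0)
    linarith
  have hjl : j ≠ Fin.last (n + 1) := by
    rintro rfl
    have := hz.monotone (Fin.le_last il)
    linarith
  have hb : ∀ i, x 0 ≤ z i ∧ z i ≤ x (Fin.last n) := by
    intro i
    have : z i ∈ insert y (Set.range x) := hzr ▸ Set.mem_range_self i
    rcases this with h | ⟨k, hk⟩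
    · rw [h]; exact ⟨h0.le, hl.le⟩
    · rw [← hk]; exact ⟨hx.monotone (Fin.zero_le k), hx.monotone (Fin.le_last k)⟩
  have hsub : ∀ t ∈ Set.range x, ∃ i, z i = t := by
    intro t ht
    have : t ∈ Set.range z := by rw [hzr]; exact Or.inr ht
    exact this
  rcases key I ω ω' hω hωs f z hz hzI j hj0 hjl with h | h
  · rw [hxz] at h
    refine ⟨z ∘ Fin.succ, hz.comp Fin.strictMono_succ, fun i => hzI _, h, (hb _).1, (hb _).2,
      ?_, ?_⟩
    · obtain ⟨j', rfl⟩ := Fin.exists_succ_eq.mpr hj0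
      exact ⟨j', hj⟩
    · intro t ht htI
      obtain ⟨i, rfl⟩ := hsub t ht
      have : i ≠ 0 := by
        rintro rfl
        exact absurd (hz.lt_iff_lt.mp htI.1) (Fin.not_lt_zero _)
      obtain ⟨i', rfl⟩ := Fin.exists_succ_eq.mpr this
      exact ⟨i', rfl⟩
  · rw [hxz] at h
    refine ⟨z ∘ Fin.castSucc, hz.comp Fin.strictMono_castSucc, fun i => hzI _, h, (hb _).1,
      (hb _).2, ?_, ?_⟩
    · obtain ⟨j', rfl⟩ := Fin.exists_castSucc_eq.mpr hjl
      exact ⟨j', hj⟩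
    · intro t ht htI
      obtain ⟨i, rfl⟩ := hsub t ht
      have : i ≠ Fin.last (n + 1) := by
        rintro rfl
        exact absurd (hz.lt_iff_lt.mp htI.2) (Fin.le_last _).not_gt
      obtain ⟨i', rfl⟩ := Fin.exists_castSucc_eq.mpr this
      exact ⟨i', rfl⟩

lemma refine_finset {n : ℕ} (I : Set ℝ) (hI : I.OrdConnected) (ω : Fin n → ℝ → ℝ) (ω' : ℝ → ℝ)
    (hω : IsPosChebyshev ω I) (hωs : IsPosChebyshev (Fin.snoc ω ω') I)
    (f : ℝ → ℝ) (N : ℕ) : ∀ (Y : Finset ℝ), Y.card ≤ N →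
    ∀ (x : Fin (n + 1) → ℝ), StrictMono x → (∀ j, x j ∈ I) →
    ∃ x' : Fin (n + 1) → ℝ, StrictMono x' ∧ (∀ j, x' j ∈ I) ∧
      divDiff ω ω' f x' ≤ divDiff ω ω' f x ∧ x 0 ≤ x' 0 ∧ x' (Fin.last n) ≤ x (Fin.last n) ∧
      (∀ t, (t ∈ Y ∨ t ∈ Set.range x) → t ∈ Set.Ioo (x' 0) (x' (Fin.last n)) →
        t ∈ Set.range x') := by
  classical
  induction N with
  | zero =>
    intro Y hY x hx hxI
    have : Y = ∅ := Finset.card_eq_zero.mp (by omega)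
    subst this
    exact ⟨x, hx, hxI, le_rfl, le_rfl, le_rfl, by simp⟩
  | succ N ih =>
    intro Y hY x hx hxI
    by_cases hcase : ∃ y ∈ Y, y ∈ Set.Ioo (x 0) (x (Fin.last n)) ∧ y ∉ Set.range x
    · obtain ⟨y, hyY, ⟨hy0, hyl⟩, hyr⟩ := hcase
      obtain ⟨x1, hx1, hx1I, hd1, h01, hl1, hy1, hr1⟩ := step I ω ω' hω hωs f x hx hxI y
        (hI.out (hxI 0) (hxI _) ⟨hy0.le, hyl.le⟩) hy0 hyl hyr
      obtain ⟨x2, hx2, hx2I, hd2, h02, hl2, hr2⟩ := ih (Y.erase y)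
        (by rw [Finset.card_erase_of_mem hyY]; omega) x1 hx1 hx1I
      refine ⟨x2, hx2, hx2I, hd2.trans hd1, h01.trans h02, hl2.trans hl1, ?_⟩
      intro t ht htI
      apply hr2 t _ htI
      rcases ht with ht | ht
      · by_cases e : t = y
        · right; rw [e]; exact hy1
        · left; exact Finset.mem_erase.mpr ⟨e, ht⟩
      · right
        exact hr1 t ht ⟨h02.trans_lt htI.1, htI.2.trans_le hl2⟩
    · push Not at hcase
      refine ⟨x, hx, hxI, le_rfl, le_rfl, le_rfl, ?_⟩
      rintro t (ht | ht) htI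
      · exact hcase t ht htI
      · exact ht

lemma shrink {n : ℕ} (I : Set ℝ) (hI : I.OrdConnected) (ω : Fin n → ℝ → ℝ) (ω' : ℝ → ℝ)
    (hω : IsPosChebyshev ω I) (hωs : IsPosChebyshev (Fin.snoc ω ω') I)
    (f : ℝ → ℝ) (x : Fin (n + 1) → ℝ) (hx : StrictMono x) (hxI : ∀ j, x j ∈ I)
    (δ : ℝ) (hδ : 0 < δ) :
    ∃ x' : Fin (n + 1) → ℝ, StrictMono x' ∧ (∀ j, x' j ∈ I) ∧
      divDiff ω ω' f x' ≤ divDiff ω ω' f x ∧ x 0 ≤ x' 0 ∧ x' (Fin.last n) ≤ x (Fin.last n) ∧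
      x' (Fin.last n) - x' 0 < δ := by
  obtain ⟨ε, hε, hεδ⟩ : ∃ ε : ℝ, 0 < ε ∧ n * ε < δ := by
    refine ⟨δ / (n + 1), by positivity, ?_⟩
    rw [mul_div_assoc', div_lt_iff₀ (by positivity)]
    nlinarith
  obtain ⟨T, -, hTf, hT⟩ := (isCompact_Icc (a := x 0) (b := x (Fin.last n))).finite_cover_balls
    (half_pos hε)
  obtain ⟨x', hx', hx'I, hd, h0, hl, hr⟩ := refine_finset I hI ω ω' hω hωs f _ hTf.toFinset
    le_rfl x hx hxI
  refine ⟨x', hx', hx'I, hd, h0, hl, ?_⟩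
  have hgap : ∀ i : Fin (n + 1), x' i - x' 0 ≤ (i : ℕ) * ε := by
    intro i
    induction i using Fin.induction with
    | zero => simp
    | succ i ihi =>
      have hlt : x' i.castSucc < x' i.succ := hx' Fin.castSucc_lt_succ
      have hlo := hx'.monotone (Fin.zero_le i.castSucc)
      have hhi := hx'.monotone (Fin.le_last i.succ)
      have : x' i.succ - x' i.castSucc ≤ ε := by
        by_contra! hgt
        obtain ⟨y, hyT, hy⟩ := Set.mem_iUnion₂.mp
          (hT (show (x' i.castSucc + x' i.succ) / 2 ∈ Set.Icc (x 0) (x (Fin.last n)) from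
            ⟨by linarith, by linarith⟩))
        rw [Metric.mem_ball, Real.dist_eq, abs_lt] at hy
        have ha : x' i.castSucc < y := by linarith [hy.2]
        have hb : y < x' i.succ := by linarith [hy.1]
        obtain ⟨k, rfl⟩ := hr y (Or.inl (by simpa using hyT)) ⟨by linarith, by linarith⟩
        have ha' := hx'.lt_iff_lt.mp ha
        have hb' := hx'.lt_iff_lt.mp hb
        simp only [Fin.lt_def, Fin.val_castSucc, Fin.val_succ] at ha' hb'
        omega
      simp only [Fin.val_castSucc, Fin.val_succ] at ihi ⊢
      push_cast
      linarith
  have := hgap (Fin.last n)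
  simp only [Fin.val_last] at this
  linarith

lemma exists_point {n : ℕ} (I : Set ℝ) (hI : I.OrdConnected) (ω : Fin n → ℝ → ℝ) (ω' : ℝ → ℝ)
    (hω : IsPosChebyshev ω I) (hωs : IsPosChebyshev (Fin.snoc ω ω') I)
    (f : ℝ → ℝ) (x : Fin (n + 1) → ℝ) (hx : StrictMono x) (hxI : ∀ j, x j ∈ I) :
    ∃ p ∈ Set.Icc (x 0) (x (Fin.last n)), ∀ δ > 0, ∃ x' : Fin (n + 1) → ℝ,
      (StrictMono x' ∧ (∀ j, x' j ∈ I) ∧ x' 0 ≤ p ∧ p ≤ x' (Fin.last n) ∧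
        x' (Fin.last n) - x' 0 < δ) ∧ divDiff ω ω' f x' ≤ divDiff ω ω' f x := by
  let X := {u : Fin (n + 1) → ℝ // StrictMono u ∧ ∀ j, u j ∈ I}
  have hstep : ∀ (k : ℕ) (u : X), ∃ v : X, divDiff ω ω' f v.1 ≤ divDiff ω ω' f u.1 ∧
      u.1 0 ≤ v.1 0 ∧ v.1 (Fin.last n) ≤ u.1 (Fin.last n) ∧
      v.1 (Fin.last n) - v.1 0 < 1 / ((k : ℝ) + 1) := by
    intro k u
    obtain ⟨v, h1, h2, h3⟩ := shrink I hI ω ω' hω hωs f u.1 u.2.1 u.2.2 (1 / ((k : ℝ) + 1))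
      (by positivity)
    exact ⟨⟨v, h1, h2⟩, h3⟩
  choose F hF1 hF2 hF3 hF4 using hstep
  let s : ℕ → X := fun k => Nat.rec ⟨x, hx, hxI⟩ (fun k u => F k u) k
  have hs : ∀ k, s (k + 1) = F k (s k) := fun k => rfl
  have hs0 : (s 0).1 = x := rfl
  have hd : ∀ k, divDiff ω ω' f (s k).1 ≤ divDiff ω ω' f x := by
    intro k
    induction k with
    | zero => exact le_rfl
    | succ k ih => rw [hs]; exact (hF1 _ _).trans ih
  have hanti : Antitone fun k => Set.Icc ((s k).1 0) ((s k).1 (Fin.last n)) := by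
    refine antitone_nat_of_succ_le fun k => ?_
    rw [hs]
    exact Set.Icc_subset_Icc (hF2 _ _) (hF3 _ _)
  have hp := ciSup_mem_iInter_Icc_of_antitone_Icc hanti
    (fun k => (s k).2.1.monotone (Fin.zero_le _))
  set p := ⨆ k, (s k).1 0
  rw [Set.mem_iInter] at hp
  refine ⟨p, hp 0, fun δ hδ => ?_⟩
  obtain ⟨k, hk⟩ := exists_nat_one_div_lt hδ
  refine ⟨(s (k + 1)).1, ⟨(s (k + 1)).2.1, (s (k + 1)).2.2, (hp (k + 1)).1, (hp (k + 1)).2, ?_⟩,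
    hd (k + 1)⟩
  rw [hs]
  exact (hF4 _ _).trans hk

/-- **Theorem 6 (mean value inequality).** For every strictly increasing tuple
`(x₀,…,xₙ)` in `I` there is a point `p ∈ [x₀, xₙ]` with
`[x₀,…,xₙ; f]_{ω*} ≥ D̲_{ω*} f(p)`. -/
theorem divDiff_ge_dinghas_at_some_point
    (n : ℕ) (hn : 0 < n) (I : Set ℝ) (hI : I.OrdConnected)
    (hne : ∃ a ∈ I, ∃ b ∈ I, a < b)
    (ω : Fin n → ℝ → ℝ) (ω' : ℝ → ℝ)
    (hω : IsPosChebyshev ω I) (hωs : IsPosChebyshev (Fin.snoc ω ω') I)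
    (f : ℝ → ℝ) (x : Fin (n + 1) → ℝ) (hx : StrictMono x) (hxI : ∀ j, x j ∈ I) :
    ∃ p ∈ Set.Icc (x 0) (x (Fin.last n)),
      dinghas ω ω' f I p ≤ (divDiff ω ω' f x : EReal) := by
  obtain ⟨p, hp, h⟩ := exists_point I hI ω ω' hω hωs f x hx hxI
  refine ⟨p, hp, ?_⟩
  unfold dinghas
  apply Filter.liminf_le_of_frequently_le'
  have hb := Filter.hasBasis_biInf_principal (S := Set.Ioi (0 : ℝ))
    (s := fun δ => {x : Fin (n + 1) → ℝ | StrictMono x ∧ (∀ j, x j ∈ I) ∧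
        x 0 ≤ p ∧ p ≤ x (Fin.last n) ∧ x (Fin.last n) - x 0 < δ})
    (by
      intro a ha b hb
      refine ⟨min a b, Set.mem_Ioi.mpr (lt_min ha hb), ?_, ?_⟩
      · rintro u ⟨h1, h2, h3, h4, h5⟩
        exact ⟨h1, h2, h3, h4, h5.trans_le (min_le_left _ _)⟩
      · rintro u ⟨h1, h2, h3, h4, h5⟩
        exact ⟨h1, h2, h3, h4, h5.trans_le (min_le_right _ _)⟩)
    ⟨1, Set.mem_Ioi.mpr one_pos⟩
  rw [hb.frequently_iff]
  intro δ hδ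
  obtain ⟨u, hu, hud⟩ := h δ hδ
  exact ⟨u, hu, EReal.coe_le_coe_iff.mpr hud⟩
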